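/- arXiv:1712.09433 — 3 statements merged into one kernel-verified Lean document; each statement's English description precedes it below -/
import Mathlib

section
/- Let S and J be independent nonnegative random variables on a probability space, let a > 0, and let B > 0. Then the average throughput τ = E[B·log₂(1 + S/(J + a))] satisfies τ = (B/ln 2) · ∫₀^∞ e^{-t·a} · E[e^{-t·J}] · (1 − E[e^{-t·S}]) · (1/t) dt, where the equality holds as an identity of values in [0, ∞] (both sides are well-defined since log₂(1+x) ≥ 0 for x ≥ 0 and the integrand on the right is nonnegative). -/
open MeasureTheory Real Set

lemma aux_exp_lintegral (x : ℝ) (hx : 0 < x) :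
    ∫⁻ t in Ioi (0 : ℝ), ENNReal.ofReal (Real.exp (-(t * x))) = ENNReal.ofReal (1 / x) := by
  have e : ∀ t : ℝ, Real.exp (-(t * x)) = Real.exp (-x * t) := fun t => by ring_nf
  simp_rw [e]
  rw [← ofReal_integral_eq_lintegral_ofReal (integrableOn_exp_mul_Ioi (by linarith) 0)
    (Filter.Eventually.of_forall fun _ => (Real.exp_pos _).le),
    integral_exp_mul_Ioi (by linarith)]
  simp

lemma aux_exp_interval (t c s : ℝ) (ht : 0 < t) (hs : 0 ≤ s) :
    ∫⁻ x in Ioc c (c + s), ENNReal.ofReal (Real.exp (-(t * x)))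
      = ENNReal.ofReal (Real.exp (-(t * c)) * (1 - Real.exp (-(t * s))) * (1 / t)) := by
  have hc : Continuous fun x : ℝ => Real.exp (-(t * x)) := by fun_prop
  rw [← ofReal_integral_eq_lintegral_ofReal (hc.integrableOn_Ioc)
    (Filter.Eventually.of_forall fun _ => (Real.exp_pos _).le),
    ← intervalIntegral.integral_of_le (by linarith)]
  congr 1
  rw [intervalIntegral.integral_eq_sub_of_hasDerivAt
    (f := fun x => -(1 / t) * Real.exp (-(t * x))) ?_ (hc.intervalIntegrable _ _)]
  · have : Real.exp (-(t * (c + s))) = Real.exp (-(t * c)) * Real.exp (-(t * s)) := by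
      rw [← Real.exp_add]; ring_nf
    rw [this]; ring
  · intro x _
    have h := ((((hasDerivAt_id x).const_mul t).neg).exp).const_mul (-(1 / t))
    have e : -(1 / t) * (Real.exp (-(t * x)) * -(t * 1)) = Real.exp (-(t * x)) := by
      field_simp
    exact e ▸ h

lemma aux_frullani (c s : ℝ) (hc : 0 < c) (hs : 0 ≤ s) :
    ∫⁻ t in Ioi (0 : ℝ),
      ENNReal.ofReal (Real.exp (-(t * c)) * (1 - Real.exp (-(t * s))) * (1 / t))
      = ENNReal.ofReal (Real.log (1 + s / c)) := by
  rw [setLIntegral_congr_fun measurableSet_Ioi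
    (fun t ht => (aux_exp_interval t c s ht hs).symm)]
  rw [lintegral_lintegral_swap (by fun_prop)]
  rw [setLIntegral_congr_fun measurableSet_Ioc
    (fun x hx => aux_exp_lintegral x (hc.trans hx.1))]
  have hi : IntervalIntegrable (fun x : ℝ => 1 / x) volume c (c + s) := by
    apply ContinuousOn.intervalIntegrable
    rw [uIcc_of_le (by linarith)]
    exact continuousOn_const.div continuousOn_id (fun x hx => (hc.trans_le hx.1).ne')
  rw [← ofReal_integral_eq_lintegral_ofReal
    ((intervalIntegrable_iff_integrableOn_Ioc_of_le (by linarith)).1 hi),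
    ← intervalIntegral.integral_of_le (by linarith),
    integral_one_div_of_pos hc (by linarith)]
  · congr 2; field_simp
  · filter_upwards [ae_restrict_mem measurableSet_Ioc] with x hx
    exact (one_div_pos.2 (hc.trans hx.1)).le

/-- **Theorem 1 (average user throughput).**
If `S` (signal power) and `J` (interference power) are independent nonnegative
random variables, `a = σₙ²/P > 0` is the normalized noise power and `B > 0` the
bandwidth, then the average throughput `τ = E[B·log₂(1 + S/(J+a))]` equals
`(B/ln 2) ∫₀^∞ e^{-ta} · E[e^{-tJ}] · (1 − E[e^{-tS}]) · t⁻¹ dt`,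
as an identity in `[0, ∞]`. -/
theorem avg_throughput_laplace
    {Ω : Type*} [MeasurableSpace Ω] (μ : Measure Ω) [IsProbabilityMeasure μ]
    (S J : Ω → ℝ) (hSm : Measurable S) (hJm : Measurable J)
    (hSnn : ∀ ω, 0 ≤ S ω) (hJnn : ∀ ω, 0 ≤ J ω)
    (hindep : ProbabilityTheory.IndepFun S J μ)
    (a B : ℝ) (ha : 0 < a) (hB : 0 < B) :
    ∫⁻ ω, ENNReal.ofReal (B * Real.logb 2 (1 + S ω / (J ω + a))) ∂μ
      = ∫⁻ t in Ioi (0 : ℝ),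
          ENNReal.ofReal ((B / Real.log 2) * Real.exp (-(t * a))
            * (∫ ω, Real.exp (-(t * J ω)) ∂μ)
            * (1 - ∫ ω, Real.exp (-(t * S ω)) ∂μ) * (1 / t)) := by
  have hl2 : 0 < Real.log 2 := Real.log_pos (by norm_num)
  have hBl : 0 ≤ B / Real.log 2 := by positivity
  have hL : ∀ ω, ENNReal.ofReal (B * Real.logb 2 (1 + S ω / (J ω + a)))
      = ∫⁻ t in Ioi (0 : ℝ), ENNReal.ofReal (B / Real.log 2) *
        ENNReal.ofReal (Real.exp (-(t * (J ω + a))) * (1 - Real.exp (-(t * S ω))) * (1 / t)) := by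
    intro ω
    rw [lintegral_const_mul _ (by fun_prop),
      aux_frullani _ _ (by linarith [hJnn ω]) (hSnn ω), ← ENNReal.ofReal_mul hBl]
    congr 1
    rw [Real.logb]; ring
  simp_rw [hL]
  rw [lintegral_lintegral_swap (by fun_prop)]
  refine setLIntegral_congr_fun measurableSet_Ioi fun t ht => ?_
  have ht : 0 < t := ht
  have hint : ∀ X : Ω → ℝ, Measurable X → (∀ ω, 0 ≤ X ω) →
      Integrable (fun ω => Real.exp (-(t * X ω))) μ := by
    intro X hX h0
    refine Integrable.of_bound (by fun_prop) 1 (Filter.Eventually.of_forall fun ω => ?_)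
    rw [Real.norm_eq_abs, abs_of_pos (Real.exp_pos _), Real.exp_le_one_iff]
    have := mul_nonneg ht.le (h0 ω)
    linarith
  have hiS := hint S hSm hSnn
  have hiJ := hint J hJm hJnn
  have hiS1 : Integrable (fun ω => 1 - Real.exp (-(t * S ω))) μ := (integrable_const 1).sub hiS
  have hind : ProbabilityTheory.IndepFun (fun ω => Real.exp (-(t * J ω)))
      (fun ω => 1 - Real.exp (-(t * S ω))) μ :=
    hindep.symm.comp (φ := fun x => Real.exp (-(t * x)))
      (ψ := fun x => 1 - Real.exp (-(t * x))) (by fun_prop) (by fun_prop)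
  have hprod : Integrable
      (fun ω => Real.exp (-(t * J ω)) * (1 - Real.exp (-(t * S ω)))) μ :=
    hind.integrable_mul hiJ hiS1
  have hE : ∫ ω, Real.exp (-(t * J ω)) * (1 - Real.exp (-(t * S ω))) ∂μ
      = (∫ ω, Real.exp (-(t * J ω)) ∂μ) * (1 - ∫ ω, Real.exp (-(t * S ω)) ∂μ) := by
    rw [hind.integral_fun_mul_eq_mul_integral hiJ.aestronglyMeasurable
      hiS1.aestronglyMeasurable, integral_sub (integrable_const 1) hiS]
    simp
  have hpt : ∀ ω, ENNReal.ofReal (B / Real.log 2) *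
        ENNReal.ofReal (Real.exp (-(t * (J ω + a))) * (1 - Real.exp (-(t * S ω))) * (1 / t))
      = ENNReal.ofReal ((B / Real.log 2 * Real.exp (-(t * a)) * (1 / t)) *
        (Real.exp (-(t * J ω)) * (1 - Real.exp (-(t * S ω))))) := by
    intro ω
    rw [← ENNReal.ofReal_mul hBl]
    congr 1
    have : Real.exp (-(t * (J ω + a))) = Real.exp (-(t * J ω)) * Real.exp (-(t * a)) := by
      rw [← Real.exp_add]; ring_nf
    rw [this]; ring
  simp_rw [hpt]
  rw [← ofReal_integral_eq_lintegral_ofReal (hprod.const_mul _), integral_const_mul, hE]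
  · congr 1; ring
  · refine Filter.Eventually.of_forall fun ω => ?_
    have h1 : Real.exp (-(t * S ω)) ≤ 1 := by
      rw [Real.exp_le_one_iff]
      have := mul_nonneg ht.le (hSnn ω)
      linarith
    have h2 : 0 ≤ 1 - Real.exp (-(t * S ω)) := by linarith
    show (0 : ℝ) ≤ _
    positivity
end

section
/- Let g be a random variable with the exponential distribution of rate 1, let S′ be a nonnegative random variable independent of g, and let ℓ > 0 be a constant. Then E[ ℓ·g / (ℓ·g + S′) ] = ∫₀^∞ (1+t)^{-2} · E[e^{-t·S′/ℓ}] dt. -/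
open MeasureTheory Real Set

lemma gammaPDF_meas : Measurable (ProbabilityTheory.gammaPDF 1 1) :=
  (ProbabilityTheory.measurable_gammaPDFReal 1 1).ennreal_ofReal

lemma expMeasure_ae_pos : ∀ᵐ x ∂(ProbabilityTheory.expMeasure 1), 0 < x := by
  unfold ProbabilityTheory.expMeasure ProbabilityTheory.gammaMeasure
  rw [ae_withDensity_iff gammaPDF_meas]
  have h0 : ∀ᵐ x : ℝ, x ≠ 0 := by
    simp [ae_iff]
  filter_upwards [h0] with x hx hne
  by_contra hcon
  exact hne (ProbabilityTheory.gammaPDF_of_neg (lt_of_le_of_ne (not_lt.mp hcon) hx))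

lemma expMeasure_integral (t : ℝ) (ht : 0 < t) :
    ∫ x, x * Real.exp (-(t * x)) ∂(ProbabilityTheory.expMeasure 1) = ((1 + t) ^ 2)⁻¹ := by
  unfold ProbabilityTheory.expMeasure ProbabilityTheory.gammaMeasure
  rw [integral_withDensity_eq_integral_toReal_smul
    gammaPDF_meas
    (by filter_upwards with x; simp [ProbabilityTheory.gammaPDF])]
  have h := Real.integral_rpow_mul_exp_neg_mul_Ioi (a := 2) (r := 1 + t) (by norm_num) (by linarith)
  have h2 : (∫ x in Ioi (0 : ℝ), x ^ ((2 : ℝ) - 1) * Real.exp (-((1 + t) * x)))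
      = ((1 + t) ^ 2)⁻¹ := by
    rw [h, Real.Gamma_two, mul_one, Real.rpow_two, one_div, inv_pow]
  rw [← h2, ← integral_indicator measurableSet_Ioi]
  congr 1
  ext x
  by_cases hx : 0 < x
  · rw [indicator_of_mem (by exact hx), ProbabilityTheory.gammaPDF,
      ENNReal.toReal_ofReal (ProbabilityTheory.gammaPDFReal_nonneg one_pos one_pos x)]
    have h3 : (2 : ℝ) - 1 = 1 := by norm_num
    simp only [ProbabilityTheory.gammaPDFReal, hx.le, if_true, h3, Real.rpow_one, Real.Gamma_one,
      sub_self, Real.rpow_zero, smul_eq_mul]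
    have h4 : Real.exp (-((1 + t) * x)) = Real.exp (-(1 * x)) * Real.exp (-(t * x)) := by
      rw [← Real.exp_add]; ring_nf
    rw [h4]
    ring
  · rw [indicator_of_notMem (by exact hx)]
    rcases (not_lt.mp hx).lt_or_eq with h | h
    · rw [ProbabilityTheory.gammaPDF_of_neg h]; simp
    · simp [h]

/-- **Lemma 1 (mean MRT power weight).**
If `g ~ Exp(1)` is the Rayleigh fading power gain, `S'` is the (nonnegative)
signal power from the other RAPs, independent of `g`, and `ℓ > 0` is the
path-loss gain, then the mean power weight satisfies
`E[ℓ·g/(ℓ·g + S')] = ∫₀^∞ (1+t)⁻² · E[e^{-t·S'/ℓ}] dt`. -/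
theorem mean_mrt_power_weight
    {Ω : Type*} [MeasurableSpace Ω] (μ : Measure Ω) [IsProbabilityMeasure μ]
    (g S' : Ω → ℝ) (hgm : Measurable g) (hS'm : Measurable S')
    (hgexp : Measure.map g μ = ProbabilityTheory.expMeasure 1)
    (hS'nn : ∀ ω, 0 ≤ S' ω)
    (hindep : ProbabilityTheory.IndepFun g S' μ)
    (ℓ : ℝ) (hℓ : 0 < ℓ) :
    ∫ ω, ℓ * g ω / (ℓ * g ω + S' ω) ∂μ
      = ∫ t in Ioi (0 : ℝ), ((1 + t) ^ 2)⁻¹ * ∫ ω, Real.exp (-(t * S' ω / ℓ)) ∂μ := by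
  have hgpos : ∀ᵐ ω ∂μ, 0 < g ω := by
    have h := expMeasure_ae_pos
    rw [← hgexp] at h
    exact ae_of_ae_map hgm.aemeasurable h
  let F : Ω → ℝ → ℝ := fun ω t => (g ω * Real.exp (-(t * g ω))) * Real.exp (-(t * S' ω / ℓ))
  have hFeq : ∀ ω t, F ω t = g ω * Real.exp (-(g ω + S' ω / ℓ) * t) := by
    intro ω t
    simp only [F]
    rw [mul_assoc, ← Real.exp_add]
    congr 2
    ring
  have hFint : ∀ ω, 0 < g ω → IntegrableOn (F ω) (Ioi 0) := by
    intro ω hω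
    have hp : 0 < g ω + S' ω / ℓ := add_pos_of_pos_of_nonneg hω (div_nonneg (hS'nn ω) hℓ.le)
    have : F ω = fun t => g ω * Real.exp (-(g ω + S' ω / ℓ) * t) := funext (hFeq ω)
    rw [this]
    exact (integrableOn_exp_mul_Ioi (by linarith) 0).const_mul _
  have hFval : ∀ ω, 0 < g ω → ∫ t in Ioi (0:ℝ), F ω t = ℓ * g ω / (ℓ * g ω + S' ω) := by
    intro ω hω
    have hp : 0 < g ω + S' ω / ℓ := add_pos_of_pos_of_nonneg hω (div_nonneg (hS'nn ω) hℓ.le)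
    have hq : 0 < ℓ * g ω + S' ω := add_pos_of_pos_of_nonneg (mul_pos hℓ hω) (hS'nn ω)
    simp only [hFeq]
    rw [integral_const_mul, integral_exp_mul_Ioi (by linarith)]
    simp only [mul_zero, Real.exp_zero]
    have e : g ω + S' ω / ℓ = (ℓ * g ω + S' ω) / ℓ := by field_simp
    rw [e]
    field_simp
  have hFm : Measurable (Function.uncurry F) := by
    simp only [F, Function.uncurry_def]
    fun_prop
  have hW : Integrable (fun ω => ℓ * g ω / (ℓ * g ω + S' ω)) μ := by
    refine Integrable.of_bound (Measurable.aestronglyMeasurable (by fun_prop)) 1 ?_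
    filter_upwards [hgpos] with ω hω
    have hl := mul_pos hℓ hω
    have hq : 0 < ℓ * g ω + S' ω := add_pos_of_pos_of_nonneg hl (hS'nn ω)
    rw [Real.norm_of_nonneg (by positivity), div_le_one hq]
    linarith [hS'nn ω]
  have hprod : Integrable (Function.uncurry F) (μ.prod (volume.restrict (Ioi 0))) := by
    rw [integrable_prod_iff hFm.aestronglyMeasurable]
    constructor
    · filter_upwards [hgpos] with ω hω using hFint ω hω
    · refine hW.congr ?_
      filter_upwards [hgpos] with ω hω
      rw [← hFval ω hω]
      congr 1
      ext t
      rw [Function.uncurry_apply_pair, Real.norm_of_nonneg]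
      simp only [F]
      positivity
  calc ∫ ω, ℓ * g ω / (ℓ * g ω + S' ω) ∂μ
      = ∫ ω, (∫ t in Ioi (0:ℝ), F ω t) ∂μ := by
        apply integral_congr_ae
        filter_upwards [hgpos] with ω hω using (hFval ω hω).symm
    _ = ∫ t in Ioi (0:ℝ), (∫ ω, F ω t ∂μ) := integral_integral_swap hprod
    _ = _ := by
        apply setIntegral_congr_fun measurableSet_Ioi
        intro t ht
        have hi : ProbabilityTheory.IndepFun (fun ω => g ω * Real.exp (-(t * g ω)))
            (fun ω => Real.exp (-(t * S' ω / ℓ))) μ :=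
          hindep.comp (φ := fun x : ℝ => x * Real.exp (-(t * x)))
            (ψ := fun x : ℝ => Real.exp (-(t * x / ℓ))) (by fun_prop) (by fun_prop)
        have h1 : ∫ ω, g ω * Real.exp (-(t * g ω)) ∂μ = ((1 + t) ^ 2)⁻¹ := by
          rw [← expMeasure_integral t ht, ← hgexp,
            integral_map hgm.aemeasurable (by fun_prop)]
        simp only [F]
        rw [← h1]
        exact hi.integral_fun_mul_eq_mul_integral (by fun_prop) (by fun_prop)
end

section
/- Let X and Y be independent nonnegative random variables on a probability space such that X + Y > 0 almost surely and X is integrable. Then E[ X / (X + Y) ] = ∫₀^∞ E[X·e^{-t·X}] · E[e^{-t·Y}] dt. -/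
open MeasureTheory Real Set

/-- **Key step in the proof of Lemma 1.**
For independent nonnegative random variables `X`, `Y` with `X + Y > 0` a.s.
and `X` integrable, the expectation of the ratio `X/(X+Y)` is given by
`E[X/(X+Y)] = ∫₀^∞ E[X·e^{-tX}] · E[e^{-tY}] dt`. -/
theorem ratio_expectation_laplace
    {Ω : Type*} [MeasurableSpace Ω] (μ : Measure Ω) [IsProbabilityMeasure μ]
    (X Y : Ω → ℝ) (hXm : Measurable X) (hYm : Measurable Y)
    (hXnn : ∀ ω, 0 ≤ X ω) (hYnn : ∀ ω, 0 ≤ Y ω)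
    (hpos : ∀ᵐ ω ∂μ, 0 < X ω + Y ω)
    (hXint : Integrable X μ)
    (hindep : ProbabilityTheory.IndepFun X Y μ) :
    ∫ ω, X ω / (X ω + Y ω) ∂μ
      = ∫ t in Ioi (0 : ℝ),
          (∫ ω, X ω * Real.exp (-(t * X ω)) ∂μ) * (∫ ω, Real.exp (-(t * Y ω)) ∂μ) := by
  have hE : ∀ᵐ ω ∂μ, Integrable (fun t => X ω * Real.exp (-(t * (X ω + Y ω))))
      (volume.restrict (Ioi (0 : ℝ))) ∧
      ∫ t in Ioi (0 : ℝ), X ω * Real.exp (-(t * (X ω + Y ω))) = X ω / (X ω + Y ω) := by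
    filter_upwards [hpos] with ω h
    have h' : -(X ω + Y ω) < 0 := by linarith
    have e : (fun t : ℝ => X ω * Real.exp (-(t * (X ω + Y ω))))
        = fun t => X ω * Real.exp (-(X ω + Y ω) * t) := by
      funext t
      congr 2
      ring
    rw [e]
    refine ⟨(integrableOn_exp_mul_Ioi h' 0).const_mul _, ?_⟩
    rw [integral_const_mul, integral_exp_mul_Ioi h' 0]
    rw [mul_zero, Real.exp_zero, neg_div_neg_eq, mul_one_div]
  have hfm : Measurable (Function.uncurry
      (fun (ω : Ω) (t : ℝ) => X ω * Real.exp (-(t * (X ω + Y ω))))) := by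
    unfold Function.uncurry
    fun_prop
  have hI : Integrable (Function.uncurry
      (fun (ω : Ω) (t : ℝ) => X ω * Real.exp (-(t * (X ω + Y ω)))))
      (μ.prod (volume.restrict (Ioi (0 : ℝ)))) := by
    rw [integrable_prod_iff hfm.aestronglyMeasurable]
    refine ⟨hE.mono fun ω h => h.1, ?_⟩
    have hb : Integrable (fun ω => X ω / (X ω + Y ω)) μ := by
      refine Integrable.of_bound (C := 1)
        (hXm.div (hXm.add hYm)).aestronglyMeasurable (Filter.Eventually.of_forall fun ω => ?_)
      have h1 := hXnn ω
      have h2 := hYnn ω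
      rw [Real.norm_of_nonneg (by positivity)]
      exact div_le_one_of_le₀ (by linarith) (by linarith)
    refine hb.congr (hE.mono fun ω h => ?_)
    simp only [Function.uncurry]
    rw [← h.2]
    refine integral_congr_ae (Filter.Eventually.of_forall fun t => ?_)
    exact (Real.norm_of_nonneg (mul_nonneg (hXnn ω) (Real.exp_pos _).le)).symm
  rw [← integral_congr_ae (hE.mono fun ω h => h.2), integral_integral_swap hI]
  refine integral_congr_ae (Filter.Eventually.of_forall fun t => ?_)
  have hi : ProbabilityTheory.IndepFun (fun ω => X ω * Real.exp (-(t * X ω)))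
      (fun ω => Real.exp (-(t * Y ω))) μ :=
    hindep.comp (φ := fun x : ℝ => x * Real.exp (-(t * x)))
      (ψ := fun y : ℝ => Real.exp (-(t * y))) (by fun_prop) (by fun_prop)
  have := hi.integral_fun_mul_eq_mul_integral
    (by fun_prop : Measurable _).aestronglyMeasurable
    (by fun_prop : Measurable _).aestronglyMeasurable
  simp only
  rw [← this]
  congr 1
  funext ω
  rw [mul_assoc, ← Real.exp_add]
  congr 2
  ring
end
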